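/- Let G be a non-cyclic finite group of order n > 1 and let q be the smallest prime divisor of n. Then (q-1)·ψ(G) < ψ(C_n). -/

import Mathlib

/-- `psi G` is the sum of the orders of all elements of the finite group `G`. -/
noncomputable def psi (G : Type*) [Group G] [Fintype G] : ℕ := ∑ x : G, orderOf x

/-- `psiC n` is the sum of the orders of all elements of the cyclic group `C_n`. -/
noncomputable def psiC (n : ℕ) : ℕ := ∑ k ∈ Finset.range n, addOrderOf (k : ZMod n)

theorem psi_of_isCyclic {H : Type*} [Group H] [Fintype H] [IsCyclic H] :
    psi H = ∑ d ∈ (Fintype.card H).divisors, d * d.totient := by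
  classical
  rw [psi, ← Finset.sum_fiberwise_of_maps_to (s := Finset.univ) (t := (Fintype.card H).divisors)
    (g := fun x : H => orderOf x)
    (fun x _ => Nat.mem_divisors.2 ⟨orderOf_dvd_card, Fintype.card_ne_zero⟩)]
  refine Finset.sum_congr rfl fun d hd => ?_
  rw [Finset.sum_congr rfl (fun x hx => (Finset.mem_filter.1 hx).2), Finset.sum_const,
    IsCyclic.card_orderOf_eq_totient (by simpa using (Nat.mem_divisors.1 hd).1), smul_eq_mul,
    mul_comm]

theorem psiC_eq_sum_divisors (n : ℕ) : psiC n = ∑ d ∈ n.divisors, d * d.totient := by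
  rcases n.eq_zero_or_pos with rfl | hn
  · simp [psiC]
  have : NeZero n := ⟨hn.ne'⟩
  have h := psi_of_isCyclic (H := Multiplicative (ZMod n))
  rw [Fintype.card_multiplicative, ZMod.card] at h
  rw [← h, psi, psiC]
  symm
  refine Finset.sum_bij' (fun x _ => (Multiplicative.toAdd x).val)
    (fun k _ => Multiplicative.ofAdd (k : ZMod n)) ?_ ?_ ?_ ?_ ?_
  · intro x _
    exact Finset.mem_range.2 (ZMod.val_lt _)
  · simp
  · intro x _
    simp
  · intro k hk
    simpa using Nat.mod_eq_of_lt (Finset.mem_range.1 hk)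
  · intro x _
    simpa using orderOf_ofAdd_eq_addOrderOf (Multiplicative.toAdd x)

theorem psi_eq_psiC {H : Type*} [Group H] [Fintype H] [IsCyclic H] :
    psi H = psiC (Fintype.card H) := by
  rw [psi_of_isCyclic, psiC_eq_sum_divisors]

theorem psiC_mul_of_coprime {m n : ℕ} (h : m.Coprime n) : psiC (m * n) = psiC m * psiC n := by
  simp only [psiC_eq_sum_divisors]
  rw [Nat.divisors_mul, Finset.mul_def, Finset.sum_image, Finset.sum_mul_sum,
    Finset.sum_product]
  · refine Finset.sum_congr rfl fun a ha => Finset.sum_congr rfl fun b hb => ?_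
    have hab : a.Coprime b := Nat.Coprime.of_dvd (Nat.dvd_of_mem_divisors ha)
      (Nat.dvd_of_mem_divisors hb) h
    rw [Nat.totient_mul hab]
    ring
  · exact_mod_cast h.mul_injOn_divisors

theorem psiC_one : psiC 1 = 1 := by simp [psiC_eq_sum_divisors]

theorem psiC_pos {n : ℕ} (hn : 0 < n) : 0 < psiC n := by
  rw [psiC_eq_sum_divisors]
  exact Finset.sum_pos (fun d hd => Nat.mul_pos (Nat.pos_of_mem_divisors hd)
    (Nat.totient_pos.2 (Nat.pos_of_mem_divisors hd))) ⟨1, by simp [hn.ne']⟩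

theorem psiC_le_of_dvd {m n : ℕ} (hn : 0 < n) (h : m ∣ n) : psiC m ≤ psiC n := by
  simp only [psiC_eq_sum_divisors]
  exact Finset.sum_le_sum_of_subset (Nat.divisors_subset_of_dvd hn.ne' h)

theorem psiC_prime_pow_succ {p : ℕ} (hp : p.Prime) (k : ℕ) :
    psiC (p ^ (k + 1)) = psiC (p ^ k) + p ^ (2 * k + 1) * (p - 1) := by
  simp only [psiC_eq_sum_divisors, Nat.sum_divisors_prime_pow hp, Finset.sum_range_succ _ (k + 1)]
  rw [Nat.totient_prime_pow_succ hp]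
  ring

theorem psiC_prime_pow {p : ℕ} (hp : p.Prime) (k : ℕ) :
    psiC (p ^ k) * (p + 1) = p ^ (2 * k + 1) + 1 := by
  obtain ⟨m, rfl⟩ : ∃ m, p = m + 1 := ⟨p - 1, by have := hp.pos; omega⟩
  induction k with
  | zero => simp [psiC_one]
  | succ k ih =>
    rw [psiC_prime_pow_succ hp, add_mul, ih, Nat.add_sub_cancel]
    ring

theorem psiC_mul_prime_ge {r z : ℕ} (hr : r.Prime) (hz : 0 < z) :
    (r * (r - 1) + 1) * psiC z ≤ psiC (z * r) := by
  obtain ⟨b, w, hw, rfl⟩ := Nat.exists_eq_pow_mul_and_not_dvd hz.ne' r hr.ne_one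
  have hc : r.Coprime w := (Nat.Prime.coprime_iff_not_dvd hr).2 hw
  rw [show r ^ b * w * r = r ^ (b + 1) * w by ring, psiC_mul_of_coprime (hc.pow_left _),
    psiC_mul_of_coprime (hc.pow_left _), ← mul_assoc]
  refine Nat.mul_le_mul_right _ ?_
  have h1 : psiC (r ^ b) ≤ r ^ (2 * b) := by
    have := psiC_prime_pow hr b
    have h2 : 1 ≤ r ^ (2 * b) := Nat.one_le_pow _ _ hr.pos
    have h3 : r ^ (2 * b + 1) = r ^ (2 * b) * r := pow_succ _ _
    refine Nat.le_of_mul_le_mul_right (c := r + 1) ?_ (by omega)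
    rw [this, mul_add, h3]
    omega
  rw [psiC_prime_pow_succ hr, pow_succ]
  calc _ = psiC (r ^ b) + psiC (r ^ b) * (r * (r - 1)) := by ring
    _ ≤ psiC (r ^ b) + r ^ (2 * b) * (r * (r - 1)) := by gcongr
    _ = _ := by ring

theorem psiC_proper_dvd {q z m : ℕ} (hm : 0 < m) (hq : ∀ r, r.Prime → r ∣ m → q ≤ r)
    (hzm : z ∣ m) (hne : z ≠ m) : (q * (q - 1) + 1) * psiC z ≤ psiC m := by
  obtain ⟨t, rfl⟩ := hzm
  have ht : t ≠ 1 := by rintro rfl; simp at hne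
  obtain ⟨r, hr, s, rfl⟩ := Nat.exists_prime_and_dvd ht
  have hqr := hq r hr ⟨z * s, by ring⟩
  have hz : 0 < z := Nat.pos_of_mul_pos_right hm
  calc _ ≤ (r * (r - 1) + 1) * psiC z := by gcongr
    _ ≤ psiC (z * r) := psiC_mul_prime_ge hr hz
    _ ≤ _ := psiC_le_of_dvd hm ⟨s, by ring⟩

theorem mul_pow_le_psiC_prime_pow {p k : ℕ} (hp : p.Prime) (hk : k ≠ 0) :
    (p - 1) * p ^ k ≤ psiC (p ^ k) := by
  obtain ⟨k, rfl⟩ := Nat.exists_eq_succ_of_ne_zero hk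
  rw [Nat.succ_eq_add_one, psiC_prime_pow_succ hp, mul_comm]
  refine le_add_left (Nat.mul_le_mul_right _ (Nat.pow_le_pow_right hp.pos (by omega)))

theorem prod_div_succ_Icc {q p : ℕ} (hq : 0 < q) (h : q ≤ p) :
    ∏ i ∈ Finset.Icc q p, ((i : ℚ) / (i + 1)) = q / (p + 1) := by
  induction p, h using Nat.le_induction with
  | base => simp
  | succ p hqp ih =>
    rw [← Finset.insert_Icc_right_eq_Icc_add_one (by omega), Finset.prod_insert (by simp), ih]
    push_cast
    field_simp

theorem psiC_ge {n q p : ℕ} (hn : 0 < n) (hq0 : 0 < q) (hqp : q ≤ p)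
    (hq : ∀ r, r.Prime → r ∣ n → q ≤ r) (hp : ∀ r, r.Prime → r ∣ n → r ≤ p) :
    q * n ^ 2 ≤ (p + 1) * psiC n := by
  have hfac := Nat.multiplicative_factorization psiC (fun x y h => psiC_mul_of_coprime h)
    psiC_one hn.ne'
  have h1 : (n : ℚ) ^ 2 * ∏ i ∈ n.primeFactors, ((i : ℚ) / (i + 1)) ≤ psiC n := by
    rw [hfac]
    have hprod : (n : ℚ) = ∏ i ∈ n.primeFactors, (i : ℚ) ^ n.factorization i := by
      exact_mod_cast (Nat.prod_factorization_pow_eq_self hn.ne').symm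
    rw [hprod]
    simp only [Finsupp.prod, Nat.support_factorization]
    push_cast
    rw [← Finset.prod_pow, ← Finset.prod_mul_distrib]
    refine Finset.prod_le_prod (fun i _ => by positivity) fun i hi => ?_
    have := psiC_prime_pow (Nat.prime_of_mem_primeFactors hi) (n.factorization i)
    have h2 : (psiC (i ^ n.factorization i) : ℚ) * (i + 1) = i ^ (2 * n.factorization i + 1) + 1 := by
      exact_mod_cast this
    rw [← mul_div_assoc, div_le_iff₀ (by positivity), h2, ← pow_mul, mul_comm _ 2, ← pow_succ]
    linarith
  have h2 : (q : ℚ) / (p + 1) ≤ ∏ i ∈ n.primeFactors, ((i : ℚ) / (i + 1)) := by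
    rw [← prod_div_succ_Icc hq0 hqp]
    refine Finset.prod_le_prod_of_subset_of_le_one ?_ ?_ ?_
    · intro r hr
      have hr' := Nat.prime_of_mem_primeFactors hr
      have hd := Nat.dvd_of_mem_primeFactors hr
      exact Finset.mem_Icc.2 ⟨hq r hr' hd, hp r hr' hd⟩
    · intro i _
      positivity
    · intro i _ _
      exact div_le_one_of_le₀ (by linarith) (by positivity)
  have h3 : (n : ℚ) ^ 2 * (q / (p + 1)) ≤ psiC n := le_trans (by gcongr) h1
  rw [← mul_div_assoc, div_le_iff₀ (by positivity)] at h3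
  have h4 : (q : ℚ) * n ^ 2 ≤ (p + 1) * psiC n := by linarith
  exact_mod_cast h4

theorem exists_conj_pow_eq {G : Type*} [Group G] {v : G} (hv : (Subgroup.zpowers v).Normal)
    (g : G) : ∃ k : ℤ, ∀ i : ℕ, g ^ i * v * (g ^ i)⁻¹ = v ^ (k ^ i) := by
  obtain ⟨k, hk⟩ := Subgroup.mem_zpowers_iff.1 (hv.conj_mem v (Subgroup.mem_zpowers v) g)
  refine ⟨k, fun i => ?_⟩
  induction i with
  | zero => simp
  | succ i ih =>
    calc g ^ (i + 1) * v * (g ^ (i + 1))⁻¹ = g * (g ^ i * v * (g ^ i)⁻¹) * g⁻¹ := by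
          rw [pow_succ']; group
      _ = v ^ (k ^ (i + 1)) := by rw [ih, ← conj_zpow, ← hk, ← zpow_mul, pow_succ']

theorem normal_zpowers_of_mem {G : Type*} [Group G] {v u : G} (hv : (Subgroup.zpowers v).Normal)
    (hu : u ∈ Subgroup.zpowers v) : (Subgroup.zpowers u).Normal := by
  obtain ⟨j, rfl⟩ := Subgroup.mem_zpowers_iff.1 hu
  refine ⟨fun x hx g => ?_⟩
  obtain ⟨i, rfl⟩ := Subgroup.mem_zpowers_iff.1 hx
  obtain ⟨k, hk⟩ := exists_conj_pow_eq hv g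
  have h1 := hk 1
  rw [pow_one, pow_one] at h1
  refine Subgroup.mem_zpowers_iff.2 ⟨i * k, ?_⟩
  rw [← conj_zpow, ← conj_zpow, h1, ← zpow_mul, ← zpow_mul, ← zpow_mul]
  congr 1
  ring

/-- An element acting coprimely on a normal cyclic `p`-subgroup acts trivially or
without fixed points. -/
theorem pow_eq_one_or_commute {G : Type*} [Group G] {v : G} (hv : (Subgroup.zpowers v).Normal)
    {p a m : ℕ} (hp : p.Prime) (ha : orderOf v = p ^ a) (hm : m.Coprime p) {g : G}
    (hg : g ^ m ∈ Subgroup.zpowers v) : g ^ m = 1 ∨ Commute g v := by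
  refine or_iff_not_imp_left.2 fun hne => ?_
  obtain ⟨k, hk⟩ := exists_conj_pow_eq hv g
  obtain ⟨j, hj⟩ := Subgroup.mem_zpowers_iff.1 hg
  have h1 : g * v * g⁻¹ = v ^ k := by simpa using hk 1
  have hfix : v ^ (k * j) = v ^ j := by
    rw [zpow_mul, ← h1, conj_zpow, hj, ← pow_succ', pow_succ, mul_inv_cancel_right]
  have hdvd : (p : ℤ) ∣ k - 1 := by
    have h2 : ((p ^ a : ℕ) : ℤ) ∣ (k - 1) * j := by
      rw [← ha, orderOf_dvd_iff_zpow_eq_one, sub_mul, one_mul, zpow_sub, hfix, mul_inv_cancel]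
    by_contra hnd
    have hco : IsCoprime ((p ^ a : ℕ) : ℤ) (k - 1) := by
      push_cast
      exact ((Nat.prime_iff_prime_int.1 hp).coprime_iff_not_dvd.2 hnd).pow_left
    have h3 := hco.dvd_of_dvd_mul_left h2
    rw [← ha, orderOf_dvd_iff_zpow_eq_one, hj] at h3
    exact hne h3
  have hcomm1 : Commute (g ^ p ^ a) v := by
    have h2 : (p : ℤ) ^ (a + 1) ∣ k ^ p ^ a - 1 := by
      simpa using dvd_sub_pow_of_dvd_sub hdvd a
    have h3 : v ^ (k ^ p ^ a) = v := by
      have h4 : ((orderOf v : ℕ) : ℤ) ∣ k ^ p ^ a - 1 := by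
        rw [ha]
        push_cast
        exact (pow_dvd_pow _ (Nat.le_succ a)).trans h2
      rw [orderOf_dvd_iff_zpow_eq_one, zpow_sub, zpow_one, mul_inv_eq_one] at h4
      exact h4
    have h5 := hk (p ^ a)
    rw [h3, mul_inv_eq_iff_eq_mul] at h5
    exact h5
  have hcomm2 : Commute (g ^ m) v := by
    rw [← hj]
    exact (Commute.refl v).zpow_left j
  have hco : IsCoprime ((p ^ a : ℕ) : ℤ) (m : ℤ) := (hm.symm.pow_left a).isCoprime
  obtain ⟨x, y, hxy⟩ := hco
  have : g = (g ^ p ^ a) ^ x * (g ^ m) ^ y := by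
    rw [← zpow_natCast g, ← zpow_natCast g, ← zpow_mul, ← zpow_mul, ← zpow_add]
    conv_lhs => rw [← zpow_one g, ← hxy]
    congr 1
    ring
  rw [this]
  exact (hcomm1.zpow_left x).mul_left (hcomm2.zpow_left y)

theorem exists_rep_pow_eq_one {G : Type*} [Group G] (P : Subgroup G) [P.Normal] [Finite P]
    (c : G ⧸ P) (h : (orderOf c).Coprime (Nat.card P)) :
    ∃ f : G, (f : G ⧸ P) = c ∧ f ^ orderOf c = 1 := by
  obtain ⟨g, rfl⟩ := QuotientGroup.mk_surjective c
  obtain ⟨s, hs1, hs0⟩ := Nat.chineseRemainder h 1 0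
  refine ⟨g ^ s, ?_, ?_⟩
  · rw [QuotientGroup.mk_pow]
    conv_rhs => rw [← pow_one (g : G ⧸ P)]
    exact pow_eq_pow_iff_modEq.2 hs1
  · obtain ⟨t, rfl⟩ := (Nat.modEq_zero_iff_dvd).1 hs0
    have hmem : g ^ orderOf (g : G ⧸ P) ∈ P := by
      rw [← QuotientGroup.eq_one_iff, QuotientGroup.mk_pow, pow_orderOf_eq_one]
    have h1 : (g ^ orderOf (g : G ⧸ P)) ^ Nat.card P = 1 :=
      orderOf_dvd_iff_pow_eq_one.1 (P.orderOf_dvd_natCard hmem)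
    rw [← pow_mul, mul_comm, pow_mul, pow_mul, h1, one_pow]

theorem psi_eq_sum_sum {G : Type*} [Group G] [Fintype G] (P : Subgroup G) [P.Normal]
    [Fintype P] [Fintype (G ⧸ P)] (f : G ⧸ P → G) (hf : ∀ c, (f c : G ⧸ P) = c) :
    psi G = ∑ c : G ⧸ P, ∑ u : P, orderOf ((u : G) * f c) := by
  rw [← Fintype.sum_prod_type', psi]
  symm
  refine Fintype.sum_bijective (fun x : (G ⧸ P) × P => (x.2 : G) * f x.1) ⟨?_, ?_⟩ _ _
    fun _ => rfl
  · rintro ⟨c, u⟩ ⟨d, w⟩ h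
    have hcd : c = d := by
      have := congrArg (QuotientGroup.mk (s := P)) h
      simpa [QuotientGroup.mk_mul, hf, (QuotientGroup.eq_one_iff _).2 u.2,
        (QuotientGroup.eq_one_iff _).2 w.2] using this
    subst hcd
    simpa using h
  · intro g
    refine ⟨(g, ⟨g * (f g)⁻¹, ?_⟩), by simp⟩
    rw [← QuotientGroup.eq_one_iff, QuotientGroup.mk_mul, QuotientGroup.mk_inv, hf, mul_inv_cancel]

theorem orderOf_mul_dvd {G : Type*} [Group G] {u f : G} {m : ℕ}
    (hu : (Subgroup.zpowers u).Normal) (hf : f ^ m = 1) :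
    orderOf (u * f) ∣ m * orderOf u := by
  have h : (u * f) ^ m ∈ Subgroup.zpowers u := by
    rw [← QuotientGroup.eq_one_iff, QuotientGroup.mk_pow, QuotientGroup.mk_mul,
      (QuotientGroup.eq_one_iff u).2 (Subgroup.mem_zpowers u), one_mul, ← QuotientGroup.mk_pow,
      hf, QuotientGroup.mk_one]
  rw [orderOf_dvd_iff_pow_eq_one, pow_mul, ← orderOf_dvd_iff_pow_eq_one]
  exact orderOf_dvd_of_mem_zpowers h

theorem orderOf_quotient_coprime {G : Type*} [Group G] [Finite G] (P : Subgroup G) [P.Normal]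
    (hco : (Nat.card P).Coprime P.index) (c : G ⧸ P) : (orderOf c).Coprime (Nat.card P) :=
  (hco.coprime_dvd_right (orderOf_dvd_natCard c)).symm

theorem psi_le_psi_mul_psi {G : Type*} [Group G] [Fintype G] {v : G}
    [hv : (Subgroup.zpowers v).Normal] [Fintype (Subgroup.zpowers v)]
    [Fintype (G ⧸ Subgroup.zpowers v)]
    (hco : (Nat.card (Subgroup.zpowers v)).Coprime (Subgroup.zpowers v).index) :
    psi G ≤ psi (G ⧸ Subgroup.zpowers v) * psi (Subgroup.zpowers v) := by
  choose f hf hf1 using fun c : G ⧸ Subgroup.zpowers v =>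
    exists_rep_pow_eq_one _ c (orderOf_quotient_coprime _ hco c)
  rw [psi_eq_sum_sum _ f hf, psi, psi, Finset.sum_mul_sum]
  refine Finset.sum_le_sum fun c _ => Finset.sum_le_sum fun u _ => ?_
  rw [← Subgroup.orderOf_coe u]
  exact Nat.le_of_dvd (Nat.mul_pos (orderOf_pos c) (orderOf_pos _))
    (orderOf_mul_dvd (normal_zpowers_of_mem hv u.2) (hf1 c))

theorem psi_le_of_noncentral {G : Type*} [Group G] [Fintype G] {v : G} {p a : ℕ}
    (hp : p.Prime) (ha : orderOf v = p ^ a) (ha0 : a ≠ 0)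
    [hv : (Subgroup.zpowers v).Normal] [Fintype (Subgroup.zpowers v)]
    [Fintype (G ⧸ Subgroup.zpowers v)] [IsCyclic (G ⧸ Subgroup.zpowers v)]
    (hG : ¬ IsCyclic G)
    (hco : (Nat.card (Subgroup.zpowers v)).Coprime (Subgroup.zpowers v).index) :
    ∃ z, z ∣ (Subgroup.zpowers v).index ∧ z ≠ (Subgroup.zpowers v).index ∧
      psi G ≤ psiC z * psiC (p ^ a) + p ^ a * psiC (Subgroup.zpowers v).index := by
  classical
  choose f hf hf1 using fun c : G ⧸ Subgroup.zpowers v =>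
    exists_rep_pow_eq_one _ c (orderOf_quotient_coprime _ hco c)
  have hcardP : Nat.card (Subgroup.zpowers v) = p ^ a := by rw [Nat.card_zpowers, ha]
  have hpsiP : psi (Subgroup.zpowers v) = psiC (p ^ a) := by
    rw [psi_eq_psiC, ← Nat.card_eq_fintype_card, hcardP]
  let Z : Subgroup (G ⧸ Subgroup.zpowers v) :=
    (Subgroup.centralizer {v}).map (QuotientGroup.mk' (Subgroup.zpowers v))
  have hcomm : ∀ u : Subgroup.zpowers v, Commute (u : G) v := by
    rintro ⟨u, hu⟩
    obtain ⟨i, rfl⟩ := Subgroup.mem_zpowers_iff.1 hu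
    exact (Commute.refl v).zpow_left i
  have hZmem : ∀ c, ∀ g : G, (g : G ⧸ Subgroup.zpowers v) = c → Commute g v → c ∈ Z := by
    intro c g hg hgv
    exact ⟨g, Subgroup.mem_centralizer_singleton_iff.2 hgv, hg⟩
  have hZ : Z ≠ ⊤ := by
    intro hZ
    refine hG ?_
    obtain ⟨c, hc⟩ := IsCyclic.exists_ofOrder_eq_natCard (α := G ⧸ Subgroup.zpowers v)
    have hcZ : c ∈ Z := hZ ▸ Subgroup.mem_top c
    obtain ⟨g, hg, hgc⟩ := hcZ
    have hgv : Commute g v := Subgroup.mem_centralizer_singleton_iff.1 hg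
    have hfg : f c * g⁻¹ ∈ Subgroup.zpowers v := by
      rw [← QuotientGroup.eq_one_iff, QuotientGroup.mk_mul, hf, QuotientGroup.mk_inv]
      exact mul_inv_eq_one.2 hgc.symm
    have hfv : Commute (f c) v := by
      have := (hcomm ⟨_, hfg⟩).mul_left hgv
      simpa using this
    have hord : orderOf (f c) = orderOf c := by
      refine Nat.dvd_antisymm (orderOf_dvd_of_pow_eq_one (hf1 c)) ?_
      conv_lhs => rw [← hf c]
      exact orderOf_map_dvd (QuotientGroup.mk' (Subgroup.zpowers v)) (f c)
    refine isCyclic_of_orderOf_eq_card (f c * v) ?_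
    rw [hfv.orderOf_mul_eq_mul_orderOf_of_coprime, hord, hc, ← Nat.card_zpowers v]
    · exact (Subgroup.card_eq_card_quotient_mul_card_subgroup _).symm
    · rw [hord, ← Nat.card_zpowers v]
      exact orderOf_quotient_coprime _ hco c
  refine ⟨Nat.card Z, Subgroup.card_subgroup_dvd_card Z,
    fun h => hZ (Subgroup.eq_top_of_card_eq Z h), ?_⟩
  have hpsiF : psi (G ⧸ Subgroup.zpowers v) = psiC (Subgroup.zpowers v).index := by
    rw [psi_eq_psiC, ← Nat.card_eq_fintype_card, Subgroup.index]
  let _ : Fintype Z := Fintype.ofFinite Z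
  have hpsiZ : psiC (Nat.card Z) = ∑ c with c ∈ Z, orderOf c := by
    rw [Nat.card_eq_fintype_card, ← psi_eq_psiC, psi]
    simp only [← Subgroup.orderOf_coe]
    exact (Finset.sum_subtype _ (by simp) _).symm
  rw [psi_eq_sum_sum _ f hf, ← Finset.sum_filter_add_sum_filter_not _ (fun c => c ∈ Z), hpsiZ,
    ← hpsiP, ← hpsiF, psi, psi, Finset.sum_mul_sum]
  refine add_le_add ?_ ?_
  · refine Finset.sum_le_sum fun c _ => Finset.sum_le_sum fun u _ => ?_
    rw [← Subgroup.orderOf_coe u]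
    exact Nat.le_of_dvd (Nat.mul_pos (orderOf_pos c) (orderOf_pos _))
      (orderOf_mul_dvd (normal_zpowers_of_mem hv u.2) (hf1 c))
  · rw [Finset.mul_sum]
    refine (Finset.sum_le_sum fun c hc => ?_).trans
      (Finset.sum_le_sum_of_subset (Finset.filter_subset (fun c => c ∉ Z) _))
    rw [← hcardP, Nat.card_eq_fintype_card, ← Finset.card_univ, ← smul_eq_mul]
    refine Finset.sum_le_card_nsmul _ _ _ fun u _ => ?_
    have hmk : (((u : G) * f c : G) : G ⧸ Subgroup.zpowers v) = c := by
      rw [QuotientGroup.mk_mul, hf, (QuotientGroup.eq_one_iff _).2 u.2, one_mul]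
    have hmem : ((u : G) * f c) ^ orderOf c ∈ Subgroup.zpowers v := by
      rw [← QuotientGroup.eq_one_iff, QuotientGroup.mk_pow, hmk, pow_orderOf_eq_one]
    have hcop : (orderOf c).Coprime p := by
      have := orderOf_quotient_coprime _ hco c
      rw [hcardP] at this
      exact this.coprime_dvd_right (dvd_pow_self p ha0)
    rcases pow_eq_one_or_commute hv hp ha hcop hmem with h | h
    · exact Nat.le_of_dvd (orderOf_pos c) (orderOf_dvd_of_pow_eq_one h)
    · exact absurd (hZmem c _ hmk h) (Finset.mem_filter.1 hc).2

theorem exists_normal_cyclic_sylow {G : Type*} [Group G] [Finite G] {p : ℕ} (hp : p.Prime)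
    (hpG : p ∣ Nat.card G) {x : G} (hx : (Subgroup.zpowers x).index < p) :
    ∃ v : G, ∃ a : ℕ, a ≠ 0 ∧ orderOf v = p ^ a ∧ (Subgroup.zpowers v).Normal ∧
      (Nat.card (Subgroup.zpowers v)).Coprime (Subgroup.zpowers v).index := by
  have : Fact p.Prime := ⟨hp⟩
  have hidx : (Subgroup.zpowers x).index ≠ 0 := Subgroup.index_ne_zero_of_finite
  have hcard : orderOf x * (Subgroup.zpowers x).index = Nat.card G := by
    rw [← Nat.card_zpowers, Subgroup.card_mul_index]
  have hnd : ¬ p ∣ (Subgroup.zpowers x).index := fun h =>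
    absurd (Nat.le_of_dvd (Nat.pos_of_ne_zero hidx) h) (by omega)
  obtain ⟨a, w, hw, hxo⟩ := Nat.exists_eq_pow_mul_and_not_dvd (orderOf_pos x).ne' p hp.ne_one
  have hv : orderOf (x ^ w) = p ^ a := by
    have hw0 : w ≠ 0 := by rintro rfl; simp at hw
    rw [orderOf_pow_of_dvd hw0 (hxo ▸ dvd_mul_left _ _), hxo,
      Nat.mul_div_cancel _ (Nat.pos_of_ne_zero hw0)]
  have ha : a ≠ 0 := by
    rintro rfl
    rw [← hcard, hxo, pow_zero, one_mul] at hpG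
    exact (hp.dvd_mul.1 hpG).elim hw hnd
  have hcardP : Nat.card (Subgroup.zpowers (x ^ w)) = p ^ a := by rw [Nat.card_zpowers, hv]
  have hindex : (Subgroup.zpowers (x ^ w)).index = w * (Subgroup.zpowers x).index := by
    have h := Subgroup.card_mul_index (Subgroup.zpowers (x ^ w))
    rw [hcardP, ← hcard, hxo, mul_assoc] at h
    exact Nat.eq_of_mul_eq_mul_left (pow_pos hp.pos a) h
  have hco : (Nat.card (Subgroup.zpowers (x ^ w))).Coprime (Subgroup.zpowers (x ^ w)).index := by
    rw [hcardP, hindex]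
    refine Nat.Coprime.pow_left _ ((hp.coprime_iff_not_dvd).2 fun h => ?_)
    exact (hp.dvd_mul.1 h).elim hw hnd
  refine ⟨x ^ w, a, ha, hv, ?_, hco⟩
  let P : Sylow p G := (IsPGroup.of_card hcardP).toSylow (by
    rw [hindex]; exact fun h => (hp.dvd_mul.1 h).elim hw hnd)
  have hP : (P : Subgroup G) = Subgroup.zpowers (x ^ w) := rfl
  have hle : Subgroup.zpowers x ≤ Subgroup.normalizer (P : Subgroup G) := by
    rw [Subgroup.zpowers_le, Subgroup.mem_normalizer_iff]
    intro h
    have hc : ∀ k : ℤ, x * (x ^ w) ^ k * x⁻¹ = (x ^ w) ^ k := fun k =>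
      mul_inv_eq_iff_eq_mul.2 (((Commute.refl x).pow_right w).zpow_right k)
    rw [hP]
    constructor
    · intro hh
      obtain ⟨k, rfl⟩ := Subgroup.mem_zpowers_iff.1 hh
      rw [hc]
      exact hh
    · intro hh
      obtain ⟨k, hk⟩ := Subgroup.mem_zpowers_iff.1 hh
      rw [← hc, mul_left_inj, mul_right_inj] at hk
      exact Subgroup.mem_zpowers_iff.2 ⟨k, hk⟩
  have hlt : Nat.card (Sylow p G) < p := by
    rw [P.card_eq_index_normalizer]
    exact (Nat.le_of_dvd (Nat.pos_of_ne_zero hidx) (Subgroup.index_dvd_of_le hle)).trans_lt hx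
  have hone : Nat.card (Sylow p G) = 1 := by
    have h := card_sylow_modEq_one p G
    rwa [Nat.ModEq, Nat.mod_eq_of_lt hlt, Nat.mod_eq_of_lt hp.one_lt] at h
  have : Subsingleton (Sylow p G) := (Nat.card_eq_one_iff_unique.1 hone).1
  rw [← hP]
  exact P.normal_of_subsingleton

theorem exists_psi_le_card_mul_orderOf (G : Type*) [Group G] [Fintype G] :
    ∃ x : G, psi G ≤ Fintype.card G * orderOf x := by
  obtain ⟨x, -, hx⟩ := Finset.exists_max_image Finset.univ (fun x : G => orderOf x) ⟨1, by simp⟩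
  exact ⟨x, by
    rw [psi, ← Finset.card_univ, ← smul_eq_mul]
    exact Finset.sum_le_card_nsmul _ _ _ hx⟩

theorem mul_psi_lt_psiC {q : ℕ} (hq0 : 0 < q) (n : ℕ) :
    ∀ {G : Type*} [Group G] [Fintype G], Fintype.card G = n →
      (∀ r, r.Prime → r ∣ n → q ≤ r) → ¬ IsCyclic G → (q - 1) * psi G < psiC n := by
  induction n using Nat.strong_induction_on with
  | _ n ih =>
  intro G _ _ hn hq hG
  classical
  by_contra! hlt
  have hn0 : 0 < n := hn ▸ Fintype.card_pos
  have hn1 : n ≠ 1 := by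
    rintro rfl
    have : Subsingleton G := Fintype.card_le_one_iff_subsingleton.1 hn.le
    exact hG inferInstance
  obtain ⟨p, hpn, hpmax⟩ := Finset.exists_max_image n.primeFactors id
    (Nat.nonempty_primeFactors.2 (by omega))
  have hp := Nat.prime_of_mem_primeFactors hpn
  have hpd := Nat.dvd_of_mem_primeFactors hpn
  have hpm : ∀ r, r.Prime → r ∣ n → r ≤ p := fun r hr hrn =>
    hpmax r (Nat.mem_primeFactors.2 ⟨hr, hrn, hn0.ne'⟩)
  have hqp := hq p hp hpd
  obtain ⟨x, hx⟩ := exists_psi_le_card_mul_orderOf G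
  have hcard : orderOf x * (Subgroup.zpowers x).index = n := by
    rw [← Nat.card_zpowers, Subgroup.card_mul_index, Nat.card_eq_fintype_card, hn]
  have hidx : (Subgroup.zpowers x).index < p := by
    have h1 := psiC_ge hn0 hq0 hqp hq hpm
    have h2 : q * (Subgroup.zpowers x).index ≤ (p + 1) * (q - 1) := by
      refine le_of_mul_le_mul_left (a := n * orderOf x) ?_
        (Nat.mul_pos hn0 (orderOf_pos x))
      calc n * orderOf x * (q * (Subgroup.zpowers x).index)
          = q * (n * (orderOf x * (Subgroup.zpowers x).index)) := by ring
        _ = q * n ^ 2 := by rw [hcard, sq]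
        _ ≤ (p + 1) * psiC n := h1
        _ ≤ (p + 1) * ((q - 1) * psi G) := by gcongr
        _ ≤ (p + 1) * ((q - 1) * (n * orderOf x)) := by rw [hn] at hx; gcongr
        _ = _ := by ring
    by_contra! h3
    have h4 : q * p ≤ (p + 1) * (q - 1) := le_trans (by gcongr) h2
    obtain ⟨t, rfl⟩ : ∃ t, q = t + 1 := ⟨q - 1, by omega⟩
    rw [Nat.add_sub_cancel] at h4
    nlinarith
  obtain ⟨v, a, ha0, ha, hv, hco⟩ := exists_normal_cyclic_sylow hp
    (by rwa [Nat.card_eq_fintype_card, hn]) hidx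
  have hcardP : Nat.card (Subgroup.zpowers v) = p ^ a := by rw [Nat.card_zpowers, ha]
  have hnP : p ^ a * (Subgroup.zpowers v).index = n := by
    rw [← hcardP, Subgroup.card_mul_index, Nat.card_eq_fintype_card, hn]
  have hpsiP : psi (Subgroup.zpowers v) = psiC (p ^ a) := by
    rw [psi_eq_psiC, ← Nat.card_eq_fintype_card, hcardP]
  have hm0 : 0 < (Subgroup.zpowers v).index :=
    Nat.pos_of_ne_zero Subgroup.index_ne_zero_of_finite
  have hpa : 1 < p ^ a := Nat.one_lt_pow ha0 hp.one_lt
  have hdvd : (Subgroup.zpowers v).index ∣ n := ⟨p ^ a, by rw [mul_comm, hnP]⟩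
  have hq' : ∀ r, r.Prime → r ∣ (Subgroup.zpowers v).index → q ≤ r :=
    fun r hr hrm => hq r hr (hrm.trans hdvd)
  have hpsin : psiC n = psiC (p ^ a) * psiC (Subgroup.zpowers v).index := by
    rw [← hnP, psiC_mul_of_coprime (hcardP ▸ hco)]
  have hApos : 0 < psiC (p ^ a) := psiC_pos (by omega)
  have hFpos := psiC_pos hm0
  rw [hpsin] at hlt
  by_cases hF : IsCyclic (G ⧸ Subgroup.zpowers v)
  · obtain ⟨z, hz, hzne, hle⟩ := psi_le_of_noncentral hp ha ha0 hG hco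
    have hZ := psiC_proper_dvd hm0 hq' hz hzne
    have hqlt : q ≤ p - 1 := by
      have hm1 : (Subgroup.zpowers v).index ≠ 1 := fun h => by
        rw [h] at hz hzne
        exact hzne (Nat.dvd_one.1 hz)
      obtain ⟨r, hr, hrm⟩ := Nat.exists_prime_and_dvd hm1
      have h1 := hpm r hr (hrm.trans hdvd)
      have h2 : r ≠ p := by
        rintro rfl
        rw [hcardP] at hco
        exact Nat.not_coprime_of_dvd_of_dvd hr.one_lt (dvd_pow_self r ha0) hrm hco
      have h3 := hq' r hr hrm
      omega
    have hA : q * p ^ a ≤ psiC (p ^ a) :=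
      (Nat.mul_le_mul_right _ hqlt).trans (mul_pow_le_psiC_prime_pow hp ha0)
    have hlt' := hlt.trans (Nat.mul_le_mul_left (q - 1) hle)
    generalize psiC (p ^ a) = A at *
    generalize psiC (Subgroup.zpowers v).index = F at *
    generalize psiC z = Y at *
    generalize p ^ a = N at *
    obtain ⟨t, rfl⟩ : ∃ t, q = t + 1 := ⟨q - 1, by omega⟩
    simp only [Nat.add_sub_cancel] at hlt' hZ
    have h1 := Nat.mul_le_mul_left ((t + 1) * t * A) hZ
    have h2 := Nat.mul_le_mul_left (((t + 1) * t + 1) * t * F) hA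
    have h3 := Nat.mul_le_mul_left ((t + 1) * ((t + 1) * t + 1)) hlt'
    have h4 : 0 < A * F := Nat.mul_pos hApos hFpos
    nlinarith
  · have h1 := ih _ (Nat.lt_of_lt_of_eq (by nlinarith) hnP)
      (G := G ⧸ Subgroup.zpowers v)
      (by rw [← Nat.card_eq_fintype_card, Subgroup.index]) hq' hF
    have h2 := psi_le_psi_mul_psi hco
    rw [hpsiP] at h2
    have h3 := hlt.trans (Nat.mul_le_mul_left (q - 1) h2)
    rw [← mul_assoc, mul_comm] at h3
    exact absurd (Nat.le_of_mul_le_mul_right h3 hApos) (by omega)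

theorem sum_orders_noncyclic_lt_minFac {G : Type*} [Group G] [Fintype G] (n : ℕ)
    (hn : Fintype.card G = n) (h1 : 1 < n) (hG : ¬ IsCyclic G) :
    (n.minFac - 1) * psi G < psiC n :=
  mul_psi_lt_psiC (Nat.minFac_pos n) n hn (fun _ hr hrn => Nat.minFac_le_of_dvd hr.two_le hrn) hG
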